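/- Suppose each c_j is strictly increasing on T_j (regularity), and let (p*, x*) be the optimal mechanism: p* : T → ℝ^m is a measurable allocation such that at every t ∈ T, if max_i W_i(t) > 0 then p*_k(t) = 1 for some maximizer k of i ↦ W_i(t) and p*_i(t) = 0 for i ≠ k, while otherwise p*(t) = 0; and x*_j(t) = θ t_j ∑_{i∈S_j} p*_i(t) − θ ∫_{a_j}^{t_j} ∑_{i∈S_j} p*_i(τ, t_{−j}) dτ. Then the expected revenue of the optimal mechanism equals the expected maximal positive virtual welfare: ER(p*, x*) = ∫_T ∑_{i=1}^m W_i(t) p*_i(t) f(t) dt = ∫_T max(0, max_{i=1,…,m} W_i(t)) f(t) dt. (Optimal-value formula, equation (33).) -/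

import Mathlib

open MeasureTheory Finset

noncomputable section Caching

/-- The joint type space T = ∏_j [a_j, ā_j]. -/
def Tspace {n : ℕ} (a abar : Fin n → ℝ) : Set (Fin n → ℝ) :=
  Set.univ.pi fun j => Set.Icc (a j) (abar j)

/-- The joint density f(t) = ∏_j f_j(t_j). -/
def jointDens {n : ℕ} (f : Fin n → ℝ → ℝ) (t : Fin n → ℝ) : ℝ :=
  ∏ j, f j (t j)

/-- Interim allocation p̃_j(τ) = ∫_{T_{−j}} (∑_{i∈S_j} p_i(τ, t_{−j})) f_{−j}(t_{−j}) dt_{−j},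
written as an integral over the whole type space against the joint density
(the coordinate j integrates out since f_j is a probability density). -/
def interimAlloc {n m : ℕ} (a abar : Fin n → ℝ) (f : Fin n → ℝ → ℝ)
    (S : Fin n → Finset (Fin m)) (p : (Fin n → ℝ) → Fin m → ℝ)
    (j : Fin n) (τ : ℝ) : ℝ :=
  ∫ t in Tspace a abar, (∑ i ∈ S j, p (Function.update t j τ) i) * jointDens f t

/-- Interim payment x̃_j(τ) = ∫_{T_{−j}} x_j(τ, t_{−j}) f_{−j}(t_{−j}) dt_{−j}. -/
def interimPay {n : ℕ} (a abar : Fin n → ℝ) (f : Fin n → ℝ → ℝ)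
    (x : (Fin n → ℝ) → Fin n → ℝ) (j : Fin n) (τ : ℝ) : ℝ :=
  ∫ t in Tspace a abar, x (Function.update t j τ) j * jointDens f t

/-- Truthful interim utility ṽ_j(t) = θ t p̃_j(t) − x̃_j(t). -/
def vtld {n m : ℕ} (θ : ℝ) (a abar : Fin n → ℝ) (f : Fin n → ℝ → ℝ)
    (S : Fin n → Finset (Fin m)) (p : (Fin n → ℝ) → Fin m → ℝ)
    (x : (Fin n → ℝ) → Fin n → ℝ) (j : Fin n) (t : ℝ) : ℝ :=
  θ * t * interimAlloc a abar f S p j t - interimPay a abar f x j t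

/-- The virtual valuation c_j(t) = t − (1 − F_j(t))/f_j(t). -/
def virtVal {n : ℕ} (a : Fin n → ℝ) (f : Fin n → ℝ → ℝ) (j : Fin n) (t : ℝ) : ℝ :=
  t - (1 - ∫ τ in (a j)..t, f j τ) / f j t

/-- The virtual welfare of content i at type profile t:
W_i(t) = ∑_{s ∈ Ω_i} (θ c_s(t_s) − h(θ)) − r_i, where Ω_i = {j : i ∈ S_j}. -/
def virtWelfare {n m : ℕ} (θ hval : ℝ) (r : Fin m → ℝ)
    (S : Fin n → Finset (Fin m)) (c : Fin n → ℝ → ℝ)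
    (i : Fin m) (t : Fin n → ℝ) : ℝ :=
  (∑ s ∈ Finset.univ.filter fun j => i ∈ S j, (θ * c s (t s) - hval)) - r i

/-- The payment rule x*_j(t) = θ t_j ∑_{i∈S_j} p_i(t)
− θ ∫_{a_j}^{t_j} ∑_{i∈S_j} p_i(τ, t_{−j}) dτ. -/
def xstar {n m : ℕ} (θ : ℝ) (a : Fin n → ℝ) (S : Fin n → Finset (Fin m))
    (p : (Fin n → ℝ) → Fin m → ℝ) (t : Fin n → ℝ) (j : Fin n) : ℝ :=
  θ * t j * (∑ i ∈ S j, p t i)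
    - θ * ∫ τ in (a j)..(t j), ∑ i ∈ S j, p (Function.update t j τ) i

/-- Expected revenue
ER(p, x) = ∫_T [ ∑_j x_j(t) − ∑_i p_i(t) r_i − ∑_i p_i(t) |Ω_i| h(θ) ] f(t) dt. -/
def expRev {n m : ℕ} (hval : ℝ) (r : Fin m → ℝ) (a abar : Fin n → ℝ)
    (f : Fin n → ℝ → ℝ) (S : Fin n → Finset (Fin m))
    (p : (Fin n → ℝ) → Fin m → ℝ) (x : (Fin n → ℝ) → Fin n → ℝ) : ℝ :=
  ∫ t in Tspace a abar,
    (∑ j, x t j - ∑ i, p t i * r i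
      - ∑ i, p t i * ((Finset.univ.filter fun j => i ∈ S j).card : ℝ) * hval)
      * jointDens f t

/-!
The payment rule charges user `j` her value minus her information rent
`θ ∫_{a_j}^{t_j} A_j(τ, t_{-j}) dτ`, where `A_j = ∑_{i ∈ S_j} p_i`. Exchanging the running variable
`τ` with the coordinate `t_j` (Fubini) shows that the expected rent is the expectation of
`θ A_j(t) (1 - F_j(t_j)) / f_j(t_j)`, so each payment has the same expectation as the virtual
payment `θ c_j(t_j) A_j(t)`. Summing over users and grouping by contents gives `∑ i, W_i p_i`, and
an allocation putting all its weight on a maximal positive `W_i` turns this sum into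
`max 0 (⨆ i, W_i)` pointwise.
-/

section CoordinateExchange

variable {ι : Type*} [DecidableEq ι] {X : ι → Type*}

/-- Exchanges the `j`-th coordinate of a profile with a separate element of the same factor. -/
def exchangeCoord (j : ι) (q : (∀ i, X i) × X j) : (∀ i, X i) × X j :=
  (Function.update q.1 j q.2, q.1 j)

theorem exchangeCoord_preimage_pi_prod (j : ι) (s : ∀ i, Set (X i)) (u : Set (X j)) :
    exchangeCoord j ⁻¹' (Set.univ.pi s ×ˢ u) = Set.univ.pi (Function.update s j u) ×ˢ s j := by
  ext ⟨t, τ⟩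
  simp only [exchangeCoord, Set.mem_preimage, Set.mem_prod, Set.mem_univ_pi]
  rw [Function.forall_update_iff t (p := fun i y => y ∈ s i),
    Function.forall_update_iff s (p := fun i v => t i ∈ v)]
  tauto

variable [∀ i, MeasurableSpace (X i)]

theorem measurable_exchangeCoord (j : ι) : Measurable (exchangeCoord (X := X) j) :=
  measurable_update'.prodMk ((measurable_pi_apply j).comp measurable_fst)

theorem measurePreserving_exchangeCoord [Fintype ι] (μ : ∀ i, Measure (X i))
    [∀ i, SigmaFinite (μ i)] (j : ι) :
    MeasurePreserving (exchangeCoord j)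
      ((Measure.pi μ).prod (μ j)) ((Measure.pi μ).prod (μ j)) := by
  refine ⟨measurable_exchangeCoord j, Eq.symm ?_⟩
  refine Measure.prod_eq_generateFrom generateFrom_pi MeasurableSpace.generateFrom_measurableSet
    isPiSystem_pi MeasurableSpace.isPiSystem_measurableSet
    (Measure.FiniteSpanningSetsIn.pi fun i => (μ i).toFiniteSpanningSetsIn)
    (μ j).toFiniteSpanningSetsIn ?_
  rintro _ ⟨s, hs, rfl⟩ u hu
  have hs' : ∀ i, MeasurableSet (s i) := fun i => hs i (Set.mem_univ i)
  have hprod : ∏ i ∈ univ.erase j, μ i (Function.update s j u i)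
      = ∏ i ∈ univ.erase j, μ i (s i) :=
    prod_congr rfl fun i hi => by rw [Function.update_of_ne (ne_of_mem_erase hi)]
  rw [Measure.map_apply (measurable_exchangeCoord j) ((MeasurableSet.univ_pi hs').prod hu),
    exchangeCoord_preimage_pi_prod, Measure.prod_prod, Measure.pi_pi, Measure.pi_pi,
    ← mul_prod_erase _ _ (mem_univ j), ← mul_prod_erase _ (fun i => μ i (s i)) (mem_univ j),
    hprod, Function.update_self]
  ring

end CoordinateExchange

section TypeSpace

variable {n : ℕ} {a abar : Fin n → ℝ} {f : Fin n → ℝ → ℝ} {g : (Fin n → ℝ) → ℝ} {C : ℝ}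

theorem measurableSet_Tspace (a abar : Fin n → ℝ) : MeasurableSet (Tspace a abar) :=
  MeasurableSet.univ_pi fun _ => measurableSet_Icc

theorem volume_restrict_Tspace (a abar : Fin n → ℝ) :
    volume.restrict (Tspace a abar)
      = Measure.pi fun j => volume.restrict (Set.Icc (a j) (abar j)) := by
  rw [Tspace, volume_pi, Measure.restrict_pi_pi]

theorem measurePreserving_exchangeCoord_Tspace (a abar : Fin n → ℝ) (j : Fin n) :
    MeasurePreserving (exchangeCoord (X := fun _ => ℝ) j)
      ((volume.restrict (Tspace a abar)).prod (volume.restrict (Set.Icc (a j) (abar j))))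
      ((volume.restrict (Tspace a abar)).prod (volume.restrict (Set.Icc (a j) (abar j)))) := by
  rw [volume_restrict_Tspace]
  exact measurePreserving_exchangeCoord (fun j => volume.restrict (Set.Icc (a j) (abar j))) j

theorem jointDens_update (f : Fin n → ℝ → ℝ) (t : Fin n → ℝ) (j : Fin n) (τ : ℝ) :
    jointDens f (Function.update t j τ) = f j τ * ∏ k ∈ univ.erase j, f k (t k) := by
  rw [jointDens, ← mul_prod_erase _ _ (mem_univ j), Function.update_self]
  congr 1
  exact prod_congr rfl fun k hk => by rw [Function.update_of_ne (ne_of_mem_erase hk)]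

theorem integrableOn_jointDens (hf : ∀ k, IntegrableOn (f k) (Set.Icc (a k) (abar k))) :
    IntegrableOn (jointDens f) (Tspace a abar) := by
  rw [IntegrableOn, volume_restrict_Tspace]
  exact Integrable.fintype_prod hf

theorem integrableOn_mul_jointDens (hf : ∀ k, IntegrableOn (f k) (Set.Icc (a k) (abar k)))
    (hg : AEStronglyMeasurable g (volume.restrict (Tspace a abar)))
    (hC : ∀ t ∈ Tspace a abar, ‖g t‖ ≤ C) :
    IntegrableOn (fun t => g t * jointDens f t) (Tspace a abar) :=
  (integrableOn_jointDens hf).bdd_mul hg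
    (ae_restrict_of_forall_mem (measurableSet_Tspace a abar) hC)

theorem integrableOn_coord_mul (j : Fin n) (hg : IntegrableOn g (Tspace a abar)) :
    IntegrableOn (fun t => t j * g t) (Tspace a abar) :=
  Integrable.bdd_mul hg (measurable_pi_apply j).aestronglyMeasurable <|
    ae_restrict_of_forall_mem (measurableSet_Tspace a abar) fun _ ht =>
      abs_le_max_abs_abs (ht j trivial).1 (ht j trivial).2

end TypeSpace

section InformationRent

variable {n : ℕ} {a abar : Fin n → ℝ} {f : Fin n → ℝ → ℝ} {g : (Fin n → ℝ) → ℝ} {C : ℝ}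
  {j : Fin n}

/-- The information rent of user `j` at type profile `t`, per unit of `θ`, when `g` is the amount
allocated to her: `∫_{a_j}^{t_j} g(τ, t_{-j}) dτ`. -/
def infoRent (a : Fin n → ℝ) (g : (Fin n → ℝ) → ℝ) (j : Fin n) (t : Fin n → ℝ) : ℝ :=
  ∫ τ in (a j)..(t j), g (Function.update t j τ)

/-- The inverse hazard rate `(1 - F_j(t)) / f_j(t)`; the virtual valuation is
`c_j(t) = t - invHazard a f j t`. -/
def invHazard (a : Fin n → ℝ) (f : Fin n → ℝ → ℝ) (j : Fin n) (t : ℝ) : ℝ :=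
  (1 - ∫ τ in (a j)..t, f j τ) / f j t

/-- The kernel `1_{t_j ≤ τ} g(t) f(τ, t_{-j})` at `q = (t, τ)`. Its `τ`-integral is the inverse
hazard rate times `g f`, and after exchanging `t_j` with `τ` it is the information rent times
`f`. -/
def rentKernel (f : Fin n → ℝ → ℝ) (g : (Fin n → ℝ) → ℝ) (j : Fin n) (q : (Fin n → ℝ) × ℝ) : ℝ :=
  {q : (Fin n → ℝ) × ℝ | q.1 j ≤ q.2}.indicator
    (fun q => g q.1 * jointDens f (Function.update q.1 j q.2)) q

theorem integrable_rentKernel (hf : ∀ k, IntegrableOn (f k) (Set.Icc (a k) (abar k)))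
    (hg : AEStronglyMeasurable g (volume.restrict (Tspace a abar)))
    (hC : ∀ t ∈ Tspace a abar, ‖g t‖ ≤ C) :
    Integrable (rentKernel f g j)
      ((volume.restrict (Tspace a abar)).prod (volume.restrict (Set.Icc (a j) (abar j)))) := by
  have hdens : Integrable (fun q : (Fin n → ℝ) × ℝ => jointDens f (Function.update q.1 j q.2))
      ((volume.restrict (Tspace a abar)).prod (volume.restrict (Set.Icc (a j) (abar j)))) :=
    (measurePreserving_exchangeCoord_Tspace a abar j).integrable_comp_of_integrable
      (Integrable.comp_fst (integrableOn_jointDens hf) _)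
  have hbound : ∀ᵐ q ∂(volume.restrict (Tspace a abar)).prod
      (volume.restrict (Set.Icc (a j) (abar j))), ‖g q.1‖ ≤ C :=
    Measure.quasiMeasurePreserving_fst.ae
      (ae_restrict_of_forall_mem (measurableSet_Tspace a abar) hC)
  exact (hdens.bdd_mul hg.comp_fst hbound).indicator
    (measurableSet_le ((measurable_pi_apply j).comp measurable_fst) measurable_snd)

theorem one_sub_integral_eq_integral_Ici_indicator {b c t : ℝ} {φ : ℝ → ℝ}
    (hφ : ∫ τ in Set.Icc b c, φ τ = 1) (ht : t ∈ Set.Icc b c) :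
    1 - ∫ τ in b..t, φ τ = ∫ τ in Set.Icc b c, (Set.Ici t).indicator φ τ := by
  have hφi : IntegrableOn φ (Set.Icc b c) := .of_integral_ne_zero (by simp [hφ])
  have htail : Set.Icc b c ∩ Set.Ici t = Set.Icc t c := by
    rw [← Set.Ici_inter_Iic, Set.inter_right_comm, Set.Ici_inter_Ici, sup_eq_right.2 ht.1,
      Set.Ici_inter_Iic]
  have hhead : IntervalIntegrable φ volume b t :=
    (intervalIntegrable_iff_integrableOn_Icc_of_le ht.1).2
      (hφi.mono_set (Set.Icc_subset_Icc_right ht.2))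
  have hrest : IntervalIntegrable φ volume t c :=
    (intervalIntegrable_iff_integrableOn_Icc_of_le ht.2).2
      (hφi.mono_set (Set.Icc_subset_Icc_left ht.1))
  rw [setIntegral_indicator measurableSet_Ici, htail, ← hφ, integral_Icc_eq_integral_Ioc,
    integral_Icc_eq_integral_Ioc, ← intervalIntegral.integral_of_le (ht.1.trans ht.2),
    ← intervalIntegral.integral_of_le ht.2,
    ← intervalIntegral.integral_add_adjacent_intervals hhead hrest, add_sub_cancel_left]

theorem integral_rentKernel (hf0 : ∀ τ ∈ Set.Icc (a j) (abar j), f j τ ≠ 0)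
    (hf1 : ∫ τ in Set.Icc (a j) (abar j), f j τ = 1) {t : Fin n → ℝ} (ht : t ∈ Tspace a abar) :
    ∫ τ in Set.Icc (a j) (abar j), rentKernel f g j (t, τ)
      = invHazard a f j (t j) * (g t * jointDens f t) := by
  have htj := ht j trivial
  have hkernel : ∀ τ, rentKernel f g j (t, τ)
      = (Set.Ici (t j)).indicator (f j) τ * (g t * ∏ k ∈ univ.erase j, f k (t k)) := by
    intro τ
    by_cases h : t j ≤ τ
    · simp only [rentKernel, Set.indicator_apply, Set.mem_ofPred_eq, Set.mem_Ici, h, if_true,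
        jointDens_update]
      ring
    · simp [rentKernel, h]
  simp_rw [hkernel]
  rw [integral_mul_const, ← one_sub_integral_eq_integral_Ici_indicator hf1 htj, invHazard,
    jointDens, ← mul_prod_erase _ _ (mem_univ j)]
  field_simp [hf0 _ htj]

theorem integral_rentKernel_exchangeCoord {t : Fin n → ℝ} (ht : t ∈ Tspace a abar) :
    ∫ τ in Set.Icc (a j) (abar j), rentKernel f g j (exchangeCoord j (t, τ))
      = infoRent a g j t * jointDens f t := by
  have htj := ht j trivial
  have hkernel : ∀ τ, rentKernel f g j (exchangeCoord j (t, τ))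
      = (Set.Iic (t j)).indicator (fun τ => g (Function.update t j τ)) τ * jointDens f t := by
    intro τ
    by_cases h : τ ≤ t j <;> simp [rentKernel, exchangeCoord, h]
  have hhead : Set.Icc (a j) (abar j) ∩ Set.Iic (t j) = Set.Icc (a j) (t j) := by
    rw [← Set.Ici_inter_Iic, Set.inter_assoc, Set.Iic_inter_Iic, inf_eq_right.2 htj.2,
      Set.Ici_inter_Iic]
  simp_rw [hkernel]
  rw [integral_mul_const, setIntegral_indicator measurableSet_Iic, hhead,
    integral_Icc_eq_integral_Ioc, ← intervalIntegral.integral_of_le htj.1, infoRent]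

theorem integrableOn_invHazard_mul (hf : ∀ k, IntegrableOn (f k) (Set.Icc (a k) (abar k)))
    (hf0 : ∀ τ ∈ Set.Icc (a j) (abar j), f j τ ≠ 0)
    (hf1 : ∫ τ in Set.Icc (a j) (abar j), f j τ = 1)
    (hg : AEStronglyMeasurable g (volume.restrict (Tspace a abar)))
    (hC : ∀ t ∈ Tspace a abar, ‖g t‖ ≤ C) :
    IntegrableOn (fun t => invHazard a f j (t j) * (g t * jointDens f t)) (Tspace a abar) :=
  IntegrableOn.congr_fun (integrable_rentKernel hf hg hC).integral_prod_left
    (fun _ ht => integral_rentKernel hf0 hf1 ht) (measurableSet_Tspace a abar)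

theorem integrableOn_infoRent_mul (hf : ∀ k, IntegrableOn (f k) (Set.Icc (a k) (abar k)))
    (hg : AEStronglyMeasurable g (volume.restrict (Tspace a abar)))
    (hC : ∀ t ∈ Tspace a abar, ‖g t‖ ≤ C) :
    IntegrableOn (fun t => infoRent a g j t * jointDens f t) (Tspace a abar) :=
  IntegrableOn.congr_fun
    ((measurePreserving_exchangeCoord_Tspace a abar j).integrable_comp_of_integrable
      (integrable_rentKernel hf hg hC)).integral_prod_left
    (fun _ ht => integral_rentKernel_exchangeCoord ht) (measurableSet_Tspace a abar)

theorem integral_infoRent_mul_eq_integral_invHazard_mul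
    (hf : ∀ k, IntegrableOn (f k) (Set.Icc (a k) (abar k)))
    (hf0 : ∀ τ ∈ Set.Icc (a j) (abar j), f j τ ≠ 0)
    (hf1 : ∫ τ in Set.Icc (a j) (abar j), f j τ = 1)
    (hg : AEStronglyMeasurable g (volume.restrict (Tspace a abar)))
    (hC : ∀ t ∈ Tspace a abar, ‖g t‖ ≤ C) :
    ∫ t in Tspace a abar, infoRent a g j t * jointDens f t
      = ∫ t in Tspace a abar, invHazard a f j (t j) * (g t * jointDens f t) := by
  have hK := integrable_rentKernel (j := j) hf hg hC
  have hmp := measurePreserving_exchangeCoord_Tspace a abar j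
  have hT := measurableSet_Tspace a abar
  calc ∫ t in Tspace a abar, infoRent a g j t * jointDens f t
      = ∫ t in Tspace a abar, ∫ τ in Set.Icc (a j) (abar j),
          rentKernel f g j (exchangeCoord j (t, τ)) :=
        setIntegral_congr_fun hT fun _ ht => (integral_rentKernel_exchangeCoord ht).symm
    _ = ∫ q, rentKernel f g j (exchangeCoord j q) ∂(volume.restrict (Tspace a abar)).prod
          (volume.restrict (Set.Icc (a j) (abar j))) :=
        (integral_prod _ (hmp.integrable_comp_of_integrable hK)).symm
    _ = ∫ q, rentKernel f g j q ∂(volume.restrict (Tspace a abar)).prod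
          (volume.restrict (Set.Icc (a j) (abar j))) := by
        rw [← integral_map hmp.aemeasurable (hmp.map_eq.symm ▸ hK.aestronglyMeasurable),
          hmp.map_eq]
    _ = ∫ t in Tspace a abar, ∫ τ in Set.Icc (a j) (abar j), rentKernel f g j (t, τ) :=
        integral_prod _ hK
    _ = ∫ t in Tspace a abar, invHazard a f j (t j) * (g t * jointDens f t) :=
        setIntegral_congr_fun hT fun _ ht => integral_rentKernel hf0 hf1 ht

end InformationRent

section Revenue

variable {n m : ℕ} {θ hval : ℝ} {r : Fin m → ℝ} {a abar : Fin n → ℝ} {f : Fin n → ℝ → ℝ}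
  {S : Fin n → Finset (Fin m)} {p : (Fin n → ℝ) → Fin m → ℝ} {x : (Fin n → ℝ) → Fin n → ℝ} {C : ℝ}
  {j : Fin n}

/-- The virtual payment `θ c_j(t_j) ∑_{i ∈ S_j} p_i(t)` of user `j` under valuations `c`: what she
would be charged if her virtual value were extracted in full. -/
def virtPay (θ : ℝ) (c : Fin n → ℝ → ℝ) (S : Fin n → Finset (Fin m))
    (p : (Fin n → ℝ) → Fin m → ℝ) (t : Fin n → ℝ) (j : Fin n) : ℝ :=
  θ * c j (t j) * ∑ i ∈ S j, p t i

theorem sum_virtWelfare_mul (θ hval : ℝ) (r : Fin m → ℝ) (S : Fin n → Finset (Fin m))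
    (c : Fin n → ℝ → ℝ) (p : (Fin n → ℝ) → Fin m → ℝ) (t : Fin n → ℝ) :
    ∑ i, virtWelfare θ hval r S c i t * p t i
      = ∑ j, virtPay θ c S p t j - ∑ i, p t i * r i
        - ∑ i, p t i * ((univ.filter fun j => i ∈ S j).card : ℝ) * hval := by
  have hswap : ∑ j, virtPay θ c S p t j
      = ∑ i, ∑ j ∈ univ.filter (fun j => i ∈ S j), θ * c j (t j) * p t i := by
    simp_rw [virtPay, mul_sum]
    exact sum_comm' (by simp)
  rw [hswap, ← sum_sub_distrib, ← sum_sub_distrib]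
  refine sum_congr rfl fun i _ => ?_
  rw [virtWelfare, sum_sub_distrib, sum_const, nsmul_eq_mul, ← sum_mul]
  ring

theorem expRev_eq_sum_integral
    (hx : ∀ j, IntegrableOn (fun t => x t j * jointDens f t) (Tspace a abar))
    (hp : ∀ i, IntegrableOn (fun t => p t i * jointDens f t) (Tspace a abar)) :
    expRev hval r a abar f S p x
      = (∑ j, ∫ t in Tspace a abar, x t j * jointDens f t)
        - ∑ i, (r i + (univ.filter fun j => i ∈ S j).card * hval)
            * ∫ t in Tspace a abar, p t i * jointDens f t := by
  have hsplit : ∀ t, (∑ j, x t j - ∑ i, p t i * r i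
        - ∑ i, p t i * ((univ.filter fun j => i ∈ S j).card : ℝ) * hval) * jointDens f t
      = ∑ j, x t j * jointDens f t
        - ∑ i, (r i + (univ.filter fun j => i ∈ S j).card * hval) * (p t i * jointDens f t) := by
    intro t
    rw [sub_sub, ← sum_add_distrib, sub_mul, sum_mul, sum_mul]
    congr 1
    exact sum_congr rfl fun i _ => by ring
  simp_rw [expRev, hsplit, ← integral_const_mul]
  rw [integral_sub (integrable_finsetSum _ fun j _ => hx j)
      (integrable_finsetSum _ fun i _ => (hp i).const_mul _),
    integral_finsetSum _ fun j _ => hx j, integral_finsetSum _ fun i _ => (hp i).const_mul _]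

theorem xstar_mul_jointDens (θ : ℝ) (a : Fin n → ℝ) (f : Fin n → ℝ → ℝ)
    (S : Fin n → Finset (Fin m)) (p : (Fin n → ℝ) → Fin m → ℝ) (t : Fin n → ℝ) (j : Fin n) :
    xstar θ a S p t j * jointDens f t
      = θ * (t j * ((∑ i ∈ S j, p t i) * jointDens f t)
        - infoRent a (fun t => ∑ i ∈ S j, p t i) j t * jointDens f t) := by
  rw [xstar, infoRent]
  ring

theorem virtPay_virtVal_mul_jointDens (θ : ℝ) (a : Fin n → ℝ) (f : Fin n → ℝ → ℝ)
    (S : Fin n → Finset (Fin m)) (p : (Fin n → ℝ) → Fin m → ℝ) (t : Fin n → ℝ) (j : Fin n) :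
    virtPay θ (virtVal a f) S p t j * jointDens f t
      = θ * (t j * ((∑ i ∈ S j, p t i) * jointDens f t)
        - invHazard a f j (t j) * ((∑ i ∈ S j, p t i) * jointDens f t)) := by
  rw [virtPay, virtVal, invHazard]
  ring

theorem integrableOn_xstar_mul_jointDens
    (hf : ∀ k, IntegrableOn (f k) (Set.Icc (a k) (abar k)))
    (hp : AEStronglyMeasurable (fun t => ∑ i ∈ S j, p t i) (volume.restrict (Tspace a abar)))
    (hC : ∀ t ∈ Tspace a abar, ‖∑ i ∈ S j, p t i‖ ≤ C) :
    IntegrableOn (fun t => xstar θ a S p t j * jointDens f t) (Tspace a abar) := by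
  simp_rw [xstar_mul_jointDens]
  exact ((integrableOn_coord_mul j (integrableOn_mul_jointDens hf hp hC)).sub
    (integrableOn_infoRent_mul hf hp hC)).const_mul θ

theorem integrableOn_virtPay_mul_jointDens
    (hf : ∀ k, IntegrableOn (f k) (Set.Icc (a k) (abar k)))
    (hf0 : ∀ τ ∈ Set.Icc (a j) (abar j), f j τ ≠ 0)
    (hf1 : ∫ τ in Set.Icc (a j) (abar j), f j τ = 1)
    (hp : AEStronglyMeasurable (fun t => ∑ i ∈ S j, p t i) (volume.restrict (Tspace a abar)))
    (hC : ∀ t ∈ Tspace a abar, ‖∑ i ∈ S j, p t i‖ ≤ C) :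
    IntegrableOn (fun t => virtPay θ (virtVal a f) S p t j * jointDens f t) (Tspace a abar) := by
  simp_rw [virtPay_virtVal_mul_jointDens]
  exact ((integrableOn_coord_mul j (integrableOn_mul_jointDens hf hp hC)).sub
    (integrableOn_invHazard_mul hf hf0 hf1 hp hC)).const_mul θ

theorem integral_xstar_eq_integral_virtPay
    (hf : ∀ k, IntegrableOn (f k) (Set.Icc (a k) (abar k)))
    (hf0 : ∀ τ ∈ Set.Icc (a j) (abar j), f j τ ≠ 0)
    (hf1 : ∫ τ in Set.Icc (a j) (abar j), f j τ = 1)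
    (hp : AEStronglyMeasurable (fun t => ∑ i ∈ S j, p t i) (volume.restrict (Tspace a abar)))
    (hC : ∀ t ∈ Tspace a abar, ‖∑ i ∈ S j, p t i‖ ≤ C) :
    ∫ t in Tspace a abar, xstar θ a S p t j * jointDens f t
      = ∫ t in Tspace a abar, virtPay θ (virtVal a f) S p t j * jointDens f t := by
  have hvalue := integrableOn_coord_mul j (integrableOn_mul_jointDens hf hp hC)
  simp_rw [xstar_mul_jointDens, virtPay_virtVal_mul_jointDens]
  rw [integral_const_mul, integral_const_mul,
    integral_sub hvalue (integrableOn_infoRent_mul hf hp hC),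
    integral_sub hvalue (integrableOn_invHazard_mul hf hf0 hf1 hp hC),
    integral_infoRent_mul_eq_integral_invHazard_mul hf hf0 hf1 hp hC]

theorem expRev_xstar_eq_integral_sum_virtWelfare_mul
    (hf0 : ∀ j, ∀ τ ∈ Set.Icc (a j) (abar j), f j τ ≠ 0)
    (hf1 : ∀ j, ∫ τ in Set.Icc (a j) (abar j), f j τ = 1)
    (hp : ∀ i, AEStronglyMeasurable (fun t => p t i) (volume.restrict (Tspace a abar)))
    (hC : ∀ t ∈ Tspace a abar, ∀ i, ‖p t i‖ ≤ C) :
    expRev hval r a abar f S p (xstar θ a S p)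
      = ∫ t in Tspace a abar,
          (∑ i, virtWelfare θ hval r S (virtVal a f) i t * p t i) * jointDens f t := by
  have hf : ∀ k, IntegrableOn (f k) (Set.Icc (a k) (abar k)) := fun k =>
    .of_integral_ne_zero (by simp [hf1 k])
  have hserved : ∀ j, AEStronglyMeasurable (fun t => ∑ i ∈ S j, p t i)
      (volume.restrict (Tspace a abar)) := fun j =>
    Finset.aestronglyMeasurable_fun_sum _ fun i _ => hp i
  have hbound : ∀ j, ∀ t ∈ Tspace a abar, ‖∑ i ∈ S j, p t i‖ ≤ ∑ _i ∈ S j, C := fun j t ht =>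
    norm_sum_le_of_le (S j) fun i _ => hC t ht i
  have hpint := fun i => integrableOn_mul_jointDens hf (hp i) fun t ht => hC t ht i
  calc expRev hval r a abar f S p (xstar θ a S p)
      = expRev hval r a abar f S p (virtPay θ (virtVal a f) S p) := by
        rw [expRev_eq_sum_integral
            (fun j => integrableOn_xstar_mul_jointDens hf (hserved j) (hbound j)) hpint,
          expRev_eq_sum_integral (fun j =>
            integrableOn_virtPay_mul_jointDens hf (hf0 j) (hf1 j) (hserved j) (hbound j)) hpint]
        congr 1
        exact sum_congr rfl fun j _ =>
          integral_xstar_eq_integral_virtPay hf (hf0 j) (hf1 j) (hserved j) (hbound j)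
    _ = ∫ t in Tspace a abar,
          (∑ i, virtWelfare θ hval r S (virtVal a f) i t * p t i) * jointDens f t := by
        simp_rw [expRev, sum_virtWelfare_mul]

end Revenue

/-- The allocation `p` gives weight one to a single maximizer of the welfares `w` if some `w i` is
positive, and is zero otherwise; this is the rule defining `p*` at one type profile. -/
structure IsWinnerTakeAll {ι : Type*} (w p : ι → ℝ) : Prop where
  exists_winner : (∃ i, 0 < w i) → ∃ k, (∀ i, w i ≤ w k) ∧ p k = 1 ∧ ∀ i, i ≠ k → p i = 0
  eq_zero : (∀ i, w i ≤ 0) → ∀ i, p i = 0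

namespace IsWinnerTakeAll

variable {ι : Type*} {w p : ι → ℝ}

theorem norm_le_one (h : IsWinnerTakeAll w p) (i : ι) : ‖p i‖ ≤ 1 := by
  by_cases hpos : ∃ i, 0 < w i
  · obtain ⟨k, -, hk, hne⟩ := h.exists_winner hpos
    rcases eq_or_ne i k with rfl | hik
    · simp [hk]
    · simp [hne i hik]
  · push Not at hpos
    simp [h.eq_zero hpos i]

theorem sum_mul_eq_max_iSup [Fintype ι] [Nonempty ι] (h : IsWinnerTakeAll w p) :
    ∑ i, w i * p i = max 0 (⨆ i, w i) := by
  by_cases hpos : ∃ i, 0 < w i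
  · obtain ⟨k, hmax, hk, hne⟩ := h.exists_winner hpos
    obtain ⟨i, hi⟩ := hpos
    have hsup : ⨆ i, w i = w k :=
      le_antisymm (ciSup_le hmax) (le_ciSup (Set.finite_range w).bddAbove k)
    rw [hsup, max_eq_right (hi.le.trans (hmax i)),
      Fintype.sum_eq_single k fun i hik => by rw [hne i hik, mul_zero], hk, mul_one]
  · push Not at hpos
    rw [max_eq_left (ciSup_le hpos)]
    exact sum_eq_zero fun i _ => by rw [h.eq_zero hpos i, mul_zero]

end IsWinnerTakeAll

theorem stmt_16_general {n m : ℕ} (hm : 0 < m) (θ hval : ℝ) (r : Fin m → ℝ) (a abar : Fin n → ℝ)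
    (f : Fin n → ℝ → ℝ) (hfpos : ∀ j, ∀ t ∈ Set.Icc (a j) (abar j), 0 < f j t)
    (hfprob : ∀ j, ∫ t in Set.Icc (a j) (abar j), f j t = 1) (S : Fin n → Finset (Fin m))
    (p : (Fin n → ℝ) → Fin m → ℝ)
    (hpmeas : ∀ i, AEStronglyMeasurable (fun t => p t i) (volume.restrict (Tspace a abar)))
    (hp : ∀ t ∈ Tspace a abar,
      IsWinnerTakeAll (fun i => virtWelfare θ hval r S (virtVal a f) i t) (p t)) :
    expRev hval r a abar f S p (xstar θ a S p)
      = (∫ t in Tspace a abar,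
          (∑ i, virtWelfare θ hval r S (virtVal a f) i t * p t i) * jointDens f t) ∧
    (∫ t in Tspace a abar,
        (∑ i, virtWelfare θ hval r S (virtVal a f) i t * p t i) * jointDens f t)
      = ∫ t in Tspace a abar,
          (max 0 (⨆ i, virtWelfare θ hval r S (virtVal a f) i t)) * jointDens f t := by
  have : Nonempty (Fin m) := ⟨⟨0, hm⟩⟩
  constructor
  · exact expRev_xstar_eq_integral_sum_virtWelfare_mul (fun j t ht => (hfpos j t ht).ne') hfprob
      hpmeas fun t ht => (hp t ht).norm_le_one
  · exact setIntegral_congr_fun (measurableSet_Tspace a abar) fun t ht =>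
      congrArg (· * jointDens f t) (hp t ht).sum_mul_eq_max_iSup

/-- Optimal-value formula (equation (33)): under regularity, the expected
revenue of the optimal mechanism (p*, x*) equals the expected maximal positive
virtual welfare:
ER(p*, x*) = ∫_T ∑_i W_i(t) p*_i(t) f(t) dt = ∫_T max(0, max_i W_i(t)) f(t) dt. -/
theorem stmt_16 {n m : ℕ} (hm : 0 < m) (θ hval : ℝ) (hθ : 0 < θ) (hh : 0 ≤ hval)
    (r : Fin m → ℝ) (a abar : Fin n → ℝ) (hab : ∀ j, a j < abar j)
    (f : Fin n → ℝ → ℝ)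
    (hfmeas : ∀ j, Measurable (f j))
    (hfpos : ∀ j, ∀ t ∈ Set.Icc (a j) (abar j), 0 < f j t)
    (hfprob : ∀ j, ∫ t in Set.Icc (a j) (abar j), f j t = 1)
    (S : Fin n → Finset (Fin m))
    -- regularity: each virtual valuation is strictly increasing
    (hreg : ∀ j, StrictMonoOn (virtVal a f j) (Set.Icc (a j) (abar j)))
    (pstar : (Fin n → ℝ) → Fin m → ℝ) (hpsmeas : Measurable pstar)
    (hp1 : ∀ t ∈ Tspace a abar,
        (∃ i, 0 < virtWelfare θ hval r S (virtVal a f) i t) →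
        ∃ k, (∀ i, virtWelfare θ hval r S (virtVal a f) i t
              ≤ virtWelfare θ hval r S (virtVal a f) k t) ∧
          pstar t k = 1 ∧ ∀ i, i ≠ k → pstar t i = 0)
    (hp2 : ∀ t ∈ Tspace a abar,
        (∀ i, virtWelfare θ hval r S (virtVal a f) i t ≤ 0) → ∀ i, pstar t i = 0)
    (hWint : ∀ i, IntegrableOn
        (fun t => virtWelfare θ hval r S (virtVal a f) i t * jointDens f t)
        (Tspace a abar)) :
    expRev hval r a abar f S pstar (xstar θ a S pstar)
      = (∫ t in Tspace a abar,
          (∑ i, virtWelfare θ hval r S (virtVal a f) i t * pstar t i)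
            * jointDens f t) ∧
    (∫ t in Tspace a abar,
        (∑ i, virtWelfare θ hval r S (virtVal a f) i t * pstar t i)
          * jointDens f t)
      = ∫ t in Tspace a abar,
          (max 0 (⨆ i, virtWelfare θ hval r S (virtVal a f) i t))
            * jointDens f t :=
  stmt_16_general hm θ hval r a abar f hfpos hfprob S pstar
    (fun i => ((measurable_pi_apply i).comp hpsmeas).aestronglyMeasurable)
    fun t ht => ⟨hp1 t ht, hp2 t ht⟩

end Caching
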